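/- arXiv:1507.02736 — 2 statements merged into one kernel-verified Lean document; each statement's English description precedes it below -/
import Mathlib

section
/- There exists a constant C₁ > 0 with the following property. For every integer D ≥ 2, every orthonormal basis φ_1,…,φ_D of ℂ^D, and every rank-d orthogonal projection P⁰ onto a coordinate subspace with C₁·log D < d < D/C₁, one has ∫_{U(D)} [ max_{1 ≤ α ≠ β ≤ D} |⟨φ_α, U P⁰ U⁻¹ φ_β⟩|² + max_{1 ≤ α ≤ D} |⟨φ_α, U P⁰ U⁻¹ φ_α⟩ − d/D|² ] dμ(U) < 10·(log D)/D, where μ is the Haar probability measure on the unitary group U(D). -/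
open MeasureTheory Filter

noncomputable section

/-- The unitary group U(D) of ℂ^D. -/
abbrev UG (D : ℕ) := Matrix.unitaryGroup (Fin D) ℂ

instance (D : ℕ) : MeasurableSpace (UG D) := borel _
instance (D : ℕ) : BorelSpace (UG D) := ⟨rfl⟩

/-- The squared euclidean norm ‖v‖² on ℂ^D. -/
def nsq {D : ℕ} (v : Fin D → ℂ) : ℝ := ∑ i, ‖v i‖ ^ 2

/-- The hermitian inner product ⟨v,w⟩ on ℂ^D (conjugate-linear in the first variable). -/
def dotc {D : ℕ} (v w : Fin D → ℂ) : ℂ := ∑ i, (starRingEnd ℂ) (v i) * w i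

/-- The orthogonal projection U P U⁻¹ onto the image under U of the range of P. -/
def rotProj {D : ℕ} (U : UG D) (P : Matrix (Fin D) (Fin D) ℂ) : Matrix (Fin D) (Fin D) ℂ :=
  (U : Matrix (Fin D) (Fin D) ℂ) * P * ((U⁻¹ : UG D) : Matrix (Fin D) (Fin D) ℂ)

/-- The orthogonal projection onto the coordinate subspace spanned by the standard
basis vectors with indices in s. -/
def coordProj (D : ℕ) (s : Finset (Fin D)) : Matrix (Fin D) (Fin D) ℂ :=
  Matrix.diagonal (fun i => if i ∈ s then 1 else 0)

/-! ### Gaussian integrals -/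

lemma lint_one (b : ℝ) (hb : 0 < b) :
    ∫⁻ z : ℂ, ENNReal.ofReal (Real.exp (-b * ‖z‖ ^ 2)) = ENNReal.ofReal (Real.pi / b) := by
  have hI : Integrable (fun z : ℂ => Real.exp (-b * ‖z‖ ^ 2)) := by
    have h := (GaussianFourier.integrable_cexp_neg_mul_sq_norm_add (V := ℂ) (b := (b : ℂ))
      (by simpa using hb) 0 0).norm
    refine h.congr (Eventually.of_forall fun z => ?_)
    simp only [Complex.norm_exp]
    congr 1
    have : (-(b:ℂ) * (‖z‖:ℂ) ^ 2 + 0 * ((inner ℝ (0:ℂ) z : ℝ) : ℂ)) = ((-b * ‖z‖ ^ 2 : ℝ) : ℂ) := by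
      push_cast; ring
    rw [this, Complex.ofReal_re]
  rw [← ofReal_integral_eq_lintegral_ofReal hI (Eventually.of_forall fun z => (Real.exp_pos _).le)]
  rw [GaussianFourier.integral_rexp_neg_mul_sq_norm hb]
  simp

lemma integrable_one (b : ℝ) (hb : 0 < b) :
    Integrable (fun z : ℂ => Real.exp (-b * ‖z‖ ^ 2)) := by
  refine ⟨by fun_prop, ?_⟩
  rw [hasFiniteIntegral_iff_ofReal (Eventually.of_forall fun z => (Real.exp_pos _).le), lint_one b hb]
  exact ENNReal.ofReal_lt_top

lemma lint_pi {D : ℕ} (b : Fin D → ℝ) (hb : ∀ i, 0 < b i) :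
    ∫⁻ g : Fin D → ℂ, ENNReal.ofReal (Real.exp (-∑ i, b i * ‖g i‖ ^ 2)) =
      ENNReal.ofReal (∏ i, Real.pi / b i) := by
  have hI : Integrable (fun g : Fin D → ℂ => ∏ i, Real.exp (-b i * ‖g i‖ ^ 2)) :=
    Integrable.fintype_prod (f := fun i (z : ℂ) => Real.exp (-b i * ‖z‖ ^ 2))
      (fun i => integrable_one (b i) (hb i))
  have e : ∀ g : Fin D → ℂ, Real.exp (-∑ i, b i * ‖g i‖ ^ 2) = ∏ i, Real.exp (-b i * ‖g i‖ ^ 2) := by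
    intro g
    rw [← Real.exp_sum, ← Finset.sum_neg_distrib]
    congr 1
    exact Finset.sum_congr rfl fun i _ => by ring
  simp_rw [e]
  rw [← ofReal_integral_eq_lintegral_ofReal hI
    (Eventually.of_forall fun z => Finset.prod_nonneg fun i _ => (Real.exp_pos _).le)]
  rw [integral_fintype_prod_volume_eq_prod (f := fun i (z : ℂ) => Real.exp (-b i * ‖z‖ ^ 2))]
  congr 1
  refine Finset.prod_congr rfl fun i _ => ?_
  rw [GaussianFourier.integral_rexp_neg_mul_sq_norm (hb i)]
  simp

/-- The Gaussian weight. -/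
def gw {D : ℕ} (g : Fin D → ℂ) : ENNReal := ENNReal.ofReal (Real.exp (-nsq g))

lemma measurable_gw {D : ℕ} : Measurable (gw (D := D)) := by
  unfold gw nsq; fun_prop

lemma lint_gw {D : ℕ} : ∫⁻ g : Fin D → ℂ, gw g = ENNReal.ofReal (Real.pi ^ D) := by
  have := lint_pi (D := D) (fun _ => 1) (fun _ => one_pos)
  simpa [gw, nsq] using this

/-! ### Unitary action -/

/-- Action of the inverse. -/
def act {D : ℕ} (U : UG D) (v : Fin D → ℂ) : Fin D → ℂ :=
  ((U⁻¹ : UG D) : Matrix (Fin D) (Fin D) ℂ).mulVec v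

lemma dotc_eq {D : ℕ} (v w : Fin D → ℂ) : dotc v w = star v ⬝ᵥ w := rfl

lemma nsq_eq {D : ℕ} (v : Fin D → ℂ) : (nsq v : ℂ) = dotc v v := by
  simp [nsq, dotc, Complex.conj_mul']

lemma act_mul {D : ℕ} (U V : UG D) (v : Fin D → ℂ) : act (U * V) v = act V (act U v) := by
  simp [act, Matrix.mulVec_mulVec]

lemma act_inv {D : ℕ} (U : UG D) (v : Fin D → ℂ) : act U⁻¹ (act U v) = v := by
  rw [← act_mul]; simp [act]

lemma act_inv' {D : ℕ} (U : UG D) (v : Fin D → ℂ) : act U (act U⁻¹ v) = v := by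
  rw [← act_mul]; simp [act]

lemma dotc_act {D : ℕ} (U : UG D) (v w : Fin D → ℂ) : dotc (act U v) (act U w) = dotc v w := by
  rw [dotc_eq, dotc_eq, act, act, Matrix.star_mulVec, ← Matrix.dotProduct_mulVec,
    Matrix.mulVec_mulVec, ← Matrix.star_eq_conjTranspose, Matrix.UnitaryGroup.star_mul_self,
    Matrix.one_mulVec]

lemma nsq_act {D : ℕ} (U : UG D) (v : Fin D → ℂ) : nsq (act U v) = nsq v := by
  have h := dotc_act U v v
  rw [← nsq_eq, ← nsq_eq] at h
  exact_mod_cast h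

lemma act_smul {D : ℕ} (U : UG D) (c : ℂ) (v : Fin D → ℂ) : act U (c • v) = c • act U v := by
  simp [act, Matrix.mulVec_smul]

lemma act_add {D : ℕ} (U : UG D) (v w : Fin D → ℂ) : act U (v + w) = act U v + act U w := by
  simp [act, Matrix.mulVec_add]

lemma continuous_act_uncurry {D : ℕ} :
    Continuous (fun x : (Fin D → ℂ) × UG D => act x.2 x.1) := by
  unfold act
  refine Continuous.matrix_mulVec ?_ continuous_fst
  exact continuous_subtype_val.comp (continuous_inv.comp continuous_snd)

lemma continuous_act {D : ℕ} (U : UG D) : Continuous (act U) := by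
  unfold act
  exact Continuous.matrix_mulVec continuous_const continuous_id

/-- The action as a continuous linear equivalence over the reals. -/
def actEquiv {D : ℕ} (U : UG D) : (Fin D → ℂ) ≃+ (Fin D → ℂ) where
  toFun := act U
  invFun := act U⁻¹
  left_inv := act_inv U
  right_inv := act_inv' U
  map_add' := act_add U

lemma map_act {D : ℕ} (U : UG D) :
    (volume : Measure (Fin D → ℂ)).map (act U) = volume := by
  have h1 : ((volume : Measure (Fin D → ℂ)).map (act U)).IsAddHaarMeasure :=
    (actEquiv U).isAddHaarMeasure_map _ (continuous_act U) (continuous_act U⁻¹)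
  have h2 := Measure.isAddLeftInvariant_eq_smul ((volume : Measure (Fin D → ℂ)).map (act U)) volume
  set c := Measure.addHaarScalarFactor ((volume : Measure (Fin D → ℂ)).map (act U)) volume
  have h3 : ∫⁻ g, gw g ∂((volume : Measure (Fin D → ℂ)).map (act U)) = ENNReal.ofReal (Real.pi ^ D) := by
    rw [lintegral_map measurable_gw (continuous_act U).measurable]
    simp only [gw, nsq_act]
    exact lint_gw
  rw [h2, lintegral_smul_measure, lint_gw] at h3
  have h4 : (c : ENNReal) = 1 := by
    have hne : ENNReal.ofReal (Real.pi ^ D) ≠ 0 := by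
      simp only [ne_eq, ENNReal.ofReal_eq_zero, not_le]; positivity
    have h5 : (c : ENNReal) * ENNReal.ofReal (Real.pi ^ D) = 1 * ENNReal.ofReal (Real.pi ^ D) := by
      rw [one_mul]; exact h3
    exact (ENNReal.mul_left_inj hne ENNReal.ofReal_ne_top).1 h5
  have h6 : c = 1 := by exact_mod_cast h4
  rw [h2, h6, one_smul]

lemma lint_act {D : ℕ} (U : UG D) (f : (Fin D → ℂ) → ENNReal) (hf : Measurable f) :
    ∫⁻ g, f (act U g) * gw g = ∫⁻ g, f g * gw g := by
  have : ∫⁻ g, f g * gw g ∂((volume : Measure (Fin D → ℂ)).map (act U)) = ∫⁻ g, f g * gw g := by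
    rw [map_act]
  rw [← this, lintegral_map (f := fun g => f g * gw g) (hf.mul measurable_gw) (continuous_act U).measurable]
  simp only [gw, nsq_act]

lemma exists_unitary {D : ℕ} (v w : Fin D → ℂ) (hv : nsq v = 1) (hw : nsq w = 1) :
    ∃ V : UG D, act V v = w := by
  have key : ∀ v : Fin D → ℂ, nsq v = 1 → ∀ i0 : Fin D, ∃ V : UG D, act V⁻¹ (Pi.single i0 1) = v := by
    intro v hv i0
    have hn : ‖(WithLp.toLp 2 v : EuclideanSpace ℂ (Fin D))‖ = 1 := by
      rw [EuclideanSpace.norm_eq]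
      have : ∑ i, ‖(WithLp.toLp 2 v : EuclideanSpace ℂ (Fin D)) i‖ ^ 2 = 1 := by simpa [nsq] using hv
      rw [this, Real.sqrt_one]
    have ho : Orthonormal ℂ (Set.domRestrict ({i0} : Set (Fin D))
        (fun _ : Fin D => (WithLp.toLp 2 v : EuclideanSpace ℂ (Fin D)))) := by
      constructor
      · intro i; simpa using hn
      · intro i j hij
        exact absurd (Subsingleton.elim i j) hij
    obtain ⟨b, hb⟩ := Orthonormal.exists_orthonormalBasis_extension_of_card_eq (by simp) ho
    have hb0 := hb i0 rfl
    let M : Matrix (Fin D) (Fin D) ℂ := Matrix.of fun i j => b j i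
    have hM : M ∈ Matrix.unitaryGroup (Fin D) ℂ := by
      rw [Matrix.mem_unitaryGroup_iff']
      ext i j
      have := b.orthonormal
      rw [orthonormal_iff_ite] at this
      have h := this i j
      rw [Matrix.mul_apply, Matrix.one_apply, ← h, PiLp.inner_apply]
      refine Finset.sum_congr rfl fun k _ => ?_
      simp [M, Matrix.star_apply, mul_comm]
    refine ⟨⟨M, hM⟩, ?_⟩
    unfold act
    rw [inv_inv]
    ext k
    simp [M, hb0]
  have : Nonempty (Fin D) := by
    by_contra h
    rw [not_nonempty_iff] at h
    simp [nsq] at hv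
  obtain ⟨i0⟩ := this
  obtain ⟨V, hV⟩ := key v hv i0
  obtain ⟨W, hW⟩ := key w hw i0
  refine ⟨V * W⁻¹, ?_⟩
  rw [act_mul, ← hV, act_inv', hW]

/-! ### Moment bounds -/

/-- The centred quadratic form. -/
def qf {D : ℕ} (s : Finset (Fin D)) (v : Fin D → ℂ) : ℝ :=
  ∑ i ∈ s, ‖v i‖ ^ 2 - (s.card : ℝ) / D * nsq v

/-- Its coefficients. -/
def qc {D : ℕ} (s : Finset (Fin D)) (i : Fin D) : ℝ :=
  (if i ∈ s then 1 else 0) - (s.card : ℝ) / D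

lemma qf_eq {D : ℕ} (s : Finset (Fin D)) (v : Fin D → ℂ) :
    qf s v = ∑ i, qc s i * ‖v i‖ ^ 2 := by
  simp only [qf, qc, nsq, sub_mul, Finset.sum_sub_distrib, Finset.mul_sum]
  simp

lemma continuous_qf {D : ℕ} (s : Finset (Fin D)) : Continuous (qf s) := by
  unfold qf nsq; fun_prop

lemma ratio_mem {D : ℕ} (s : Finset (Fin D)) :
    0 ≤ (s.card : ℝ) / D ∧ (s.card : ℝ) / D ≤ 1 := by
  have h : (s.card : ℝ) ≤ D := by
    have := s.card_le_univ
    simp only [Fintype.card_fin] at this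
    exact_mod_cast this
  exact ⟨by positivity, div_le_one_of_le₀ h (by positivity)⟩

lemma abs_qc {D : ℕ} (s : Finset (Fin D)) (i : Fin D) : |qc s i| ≤ 1 := by
  obtain ⟨h0, h1⟩ := ratio_mem s
  unfold qc
  split_ifs <;> rw [abs_le] <;> constructor <;> linarith

lemma sum_qc {D : ℕ} (hD : 0 < D) (s : Finset (Fin D)) : ∑ i, qc s i = 0 := by
  have : (D : ℝ) ≠ 0 := by positivity
  simp only [qc, Finset.sum_sub_distrib]
  simp
  field_simp
  ring

lemma sum_qc_sq {D : ℕ} (hD : 0 < D) (s : Finset (Fin D)) : ∑ i, qc s i ^ 2 ≤ s.card := by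
  have h0 : (D : ℝ) ≠ 0 := by positivity
  have e : ∀ i, qc s i ^ 2 = (if i ∈ s then 1 else 0) - (s.card : ℝ) / D * (if i ∈ s then 1 else 0)
      - (s.card : ℝ) / D * qc s i := by
    intro i; unfold qc; split_ifs <;> ring
  simp_rw [e, Finset.sum_sub_distrib, ← Finset.mul_sum, sum_qc hD]
  simp
  positivity

lemma inv_le_exp (t : ℝ) (ht : |t| ≤ 1 / 2) : 1 / (1 - t) ≤ Real.exp (t + t ^ 2) := by
  obtain ⟨h1, h2⟩ := abs_le.1 ht
  have hp : 0 < 1 - t := by linarith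
  rw [div_le_iff₀ hp]
  rcases le_total 0 t with h | h
  · have := Real.quadratic_le_exp_of_nonneg (x := t + t ^ 2) (by positivity)
    have h3 : (1 + (t + t ^ 2) + (t + t ^ 2) ^ 2 / 2) * (1 - t) ≤ Real.exp (t + t ^ 2) * (1 - t) :=
      mul_le_mul_of_nonneg_right this hp.le
    refine le_trans ?_ h3
    have h4 : 0 ≤ t ^ 2 * (1 - t - t ^ 2 - t ^ 3) := by
      apply mul_nonneg (by positivity)
      have a : t ^ 2 ≤ t * (1 / 2) := by nlinarith
      have b : t ^ 3 ≤ t * (1 / 4) := by nlinarith [mul_nonneg h h]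
      linarith
    nlinarith
  · have := Real.add_one_le_exp (t + t ^ 2)
    have h3 : (t + t ^ 2 + 1) * (1 - t) ≤ Real.exp (t + t ^ 2) * (1 - t) :=
      mul_le_mul_of_nonneg_right this hp.le
    refine le_trans ?_ h3
    have : 0 ≤ (-t) ^ 3 := by apply pow_nonneg; linarith
    nlinarith

lemma mgf_bound {D : ℕ} (hD : 0 < D) (s : Finset (Fin D)) (l : ℝ) (hl : |l| ≤ 1 / 2) :
    ∫⁻ g : Fin D → ℂ, ENNReal.ofReal (Real.exp (l * qf s g)) * gw g ≤
      ENNReal.ofReal (Real.exp (l ^ 2 * s.card) * Real.pi ^ D) := by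
  have habs : ∀ i, |l * qc s i| ≤ 1 / 2 := by
    intro i
    rw [abs_mul]
    calc |l| * |qc s i| ≤ (1 / 2) * 1 := mul_le_mul hl (abs_qc s i) (abs_nonneg _) (by norm_num)
      _ = 1 / 2 := by norm_num
  have hpos : ∀ i, 0 < 1 - l * qc s i := by
    intro i
    have := (abs_le.1 (habs i)).2
    linarith
  have e : ∀ g : Fin D → ℂ, ENNReal.ofReal (Real.exp (l * qf s g)) * gw g =
      ENNReal.ofReal (Real.exp (-∑ i, (1 - l * qc s i) * ‖g i‖ ^ 2)) := by
    intro g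
    rw [gw, ← ENNReal.ofReal_mul (Real.exp_pos _).le, ← Real.exp_add, qf_eq, nsq]
    congr 2
    simp only [sub_mul, Finset.sum_sub_distrib, Finset.mul_sum, one_mul, mul_assoc]
    ring
  simp_rw [e]
  rw [lint_pi _ hpos]
  apply ENNReal.ofReal_le_ofReal
  calc ∏ i, Real.pi / (1 - l * qc s i)
      ≤ ∏ i, Real.pi * Real.exp (l * qc s i + (l * qc s i) ^ 2) := by
        apply Finset.prod_le_prod
        · intro i _; exact div_nonneg Real.pi_pos.le (hpos i).le
        · intro i _
          rw [div_eq_mul_one_div]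
          exact mul_le_mul_of_nonneg_left (inv_le_exp _ (habs i)) Real.pi_pos.le
    _ = Real.exp (l ^ 2 * ∑ i, qc s i ^ 2) * Real.pi ^ D := by
        rw [Finset.prod_mul_distrib, ← Real.exp_sum, Finset.sum_add_distrib, ← Finset.mul_sum,
          sum_qc hD]
        simp [mul_pow, Finset.mul_sum, mul_comm]
    _ ≤ _ := by
        gcongr
        exact sum_qc_sq hD s

lemma pow_le_exp_sum (x : ℝ) (p : ℕ) :
    x ^ (2 * p) ≤ (2 * p).factorial * (Real.exp x + Real.exp (-x)) := by
  have h1 := Real.pow_div_factorial_le_exp |x| (abs_nonneg x) (2 * p)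
  rw [div_le_iff₀ (by positivity)] at h1
  have h2 : |x| ^ (2 * p) = x ^ (2 * p) := by rw [pow_mul, sq_abs, ← pow_mul]
  rw [h2] at h1
  have h3 : Real.exp |x| ≤ Real.exp x + Real.exp (-x) := Real.exp_abs_le x
  nlinarith [Nat.cast_nonneg (α := ℝ) (2 * p).factorial]

lemma upper_l {D : ℕ} (hD : 0 < D) (s : Finset (Fin D)) (p : ℕ) (l : ℝ) (hl0 : 0 < l)
    (hl : l ≤ 1 / 2) :
    ∫⁻ g : Fin D → ℂ, ENNReal.ofReal (qf s g ^ (2 * p)) * gw g ≤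
      ENNReal.ofReal ((2 * p).factorial / l ^ (2 * p) *
        (2 * (Real.exp (l ^ 2 * s.card) * Real.pi ^ D))) := by
  have hm : ∀ l : ℝ, Measurable fun g : Fin D → ℂ => ENNReal.ofReal (Real.exp (l * qf s g)) * gw g := by
    intro l
    have := (continuous_qf s).measurable
    have := measurable_gw (D := D)
    fun_prop
  calc ∫⁻ g : Fin D → ℂ, ENNReal.ofReal (qf s g ^ (2 * p)) * gw g
      ≤ ∫⁻ g : Fin D → ℂ, ENNReal.ofReal ((2 * p).factorial / l ^ (2 * p)) *
          (ENNReal.ofReal (Real.exp (l * qf s g)) * gw g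
            + ENNReal.ofReal (Real.exp (-l * qf s g)) * gw g) := by
        apply lintegral_mono
        intro g
        dsimp only
        rw [← add_mul, ← mul_assoc, ← ENNReal.ofReal_add (Real.exp_pos _).le (Real.exp_pos _).le,
          ← ENNReal.ofReal_mul (by positivity)]
        gcongr
        have := pow_le_exp_sum (l * qf s g) p
        rw [mul_pow] at this
        rw [div_mul_eq_mul_div, le_div_iff₀ (by positivity), neg_mul]
        linarith
    _ = ENNReal.ofReal ((2 * p).factorial / l ^ (2 * p)) *
          ((∫⁻ g : Fin D → ℂ, ENNReal.ofReal (Real.exp (l * qf s g)) * gw g)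
            + ∫⁻ g : Fin D → ℂ, ENNReal.ofReal (Real.exp (-l * qf s g)) * gw g) := by
        rw [lintegral_const_mul' _ _ ENNReal.ofReal_ne_top, lintegral_add_left (hm l)]
    _ ≤ ENNReal.ofReal ((2 * p).factorial / l ^ (2 * p)) *
          (ENNReal.ofReal (Real.exp (l ^ 2 * s.card) * Real.pi ^ D)
            + ENNReal.ofReal (Real.exp ((-l) ^ 2 * s.card) * Real.pi ^ D)) := by
        gcongr
        · exact mgf_bound hD s l (by rw [abs_of_pos hl0]; exact hl)
        · exact mgf_bound hD s (-l) (by rw [abs_neg, abs_of_pos hl0]; exact hl)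
    _ = _ := by
        rw [neg_sq, ← ENNReal.ofReal_add (by positivity) (by positivity),
          ← ENNReal.ofReal_mul (by positivity)]
        congr 1; ring

lemma upper_p {D : ℕ} (hD : 0 < D) (s : Finset (Fin D)) (p : ℕ) (hp : 1 ≤ p)
    (hps : 4 * p ≤ s.card) :
    ∫⁻ g : Fin D → ℂ, ENNReal.ofReal (qf s g ^ (2 * p)) * gw g ≤
      ENNReal.ofReal (2 * (12 * p * s.card) ^ p * Real.pi ^ D) := by
  have hp' : (0:ℝ) < p := by exact_mod_cast hp
  have hs' : (0:ℝ) < s.card := by exact_mod_cast (by omega : 0 < s.card)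
  have hps' : 4 * (p:ℝ) ≤ s.card := by exact_mod_cast hps
  have hl2 : Real.sqrt (p / s.card) ^ 2 = p / s.card := Real.sq_sqrt (by positivity)
  have hl : Real.sqrt (p / s.card) ≤ 1 / 2 := by
    apply Real.sqrt_le_iff.2 ⟨by norm_num, ?_⟩
    rw [div_le_iff₀ hs']; linarith
  refine (upper_l hD s p (Real.sqrt (p / s.card)) (by positivity) hl).trans ?_
  apply ENNReal.ofReal_le_ofReal
  rw [pow_mul, hl2]
  have h1 : ((2 * p).factorial : ℝ) ≤ (4 * (p:ℝ) ^ 2) ^ p := by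
    have : ((2 * p).factorial : ℝ) ≤ ((2 * p : ℕ) : ℝ) ^ (2 * p) := by
      exact_mod_cast Nat.factorial_le_pow (2 * p)
    refine this.trans (le_of_eq ?_)
    rw [pow_mul]; push_cast; congr 1; ring
  have h2 : Real.exp (p / s.card * s.card) ≤ 3 ^ p := by
    rw [div_mul_cancel₀ _ hs'.ne', ← Real.exp_one_pow]
    gcongr
    exact Real.exp_one_lt_d9.le.trans (by norm_num)
  calc _ ≤ (4 * (p:ℝ) ^ 2) ^ p / (p / s.card) ^ p * (2 * (3 ^ p * Real.pi ^ D)) := by gcongr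
    _ = _ := by
      have : (12 * (p:ℝ) * s.card) ^ p = (4 * (p:ℝ) ^ 2) ^ p / (p / s.card) ^ p * 3 ^ p := by
        rw [← div_pow, ← mul_pow]; congr 1; field_simp; ring
      rw [this]; ring

lemma lower_n {D : ℕ} (hD : 2 ≤ D) (n : ℕ) :
    ENNReal.ofReal (((D:ℝ) / 2) ^ n * Real.pi ^ D / 4) ≤
      ∫⁻ g : Fin D → ℂ, ENNReal.ofReal (nsq g ^ n) * gw g := by
  have hnn : ∀ g : Fin D → ℂ, 0 ≤ nsq g := fun g => Finset.sum_nonneg fun i _ => by positivity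
  have hpt : ∀ y : ℝ, 0 ≤ y → ((D:ℝ) / 2) ^ n * Real.exp (-y) ≤ y ^ n * Real.exp (-y)
      + ((D:ℝ) / 2) ^ n * Real.exp (D / 2) * Real.exp (-(2 * y)) := by
    intro y hy
    rcases le_total ((D:ℝ) / 2) y with h | h
    · have : ((D:ℝ) / 2) ^ n * Real.exp (-y) ≤ y ^ n * Real.exp (-y) := by gcongr
      have : 0 ≤ ((D:ℝ) / 2) ^ n * Real.exp (D / 2) * Real.exp (-(2 * y)) := by positivity
      linarith
    · have h1 : Real.exp (-y) ≤ Real.exp (D / 2) * Real.exp (-(2 * y)) := by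
        rw [← Real.exp_add]; apply Real.exp_le_exp.2; linarith
      have h2 : ((D:ℝ) / 2) ^ n * Real.exp (-y) ≤
        ((D:ℝ) / 2) ^ n * (Real.exp (D / 2) * Real.exp (-(2 * y))) := by gcongr
      have h3 : 0 ≤ y ^ n * Real.exp (-y) := by positivity
      linarith
  have hns : Measurable (nsq (D := D)) := by unfold nsq; fun_prop
  have hgw := measurable_gw (D := D)
  have h2 : ∫⁻ g : Fin D → ℂ, ENNReal.ofReal (Real.exp (-(2 * nsq g))) =
      ENNReal.ofReal ((Real.pi / 2) ^ D) := by
    have := lint_pi (D := D) (fun _ => 2) (fun _ => two_pos)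
    simpa [nsq, Finset.mul_sum, div_pow] using this
  have key : ENNReal.ofReal (((D:ℝ) / 2) ^ n) * ENNReal.ofReal (Real.pi ^ D) ≤
      (∫⁻ g : Fin D → ℂ, ENNReal.ofReal (nsq g ^ n) * gw g) +
      ENNReal.ofReal (((D:ℝ) / 2) ^ n * Real.exp (D / 2)) * ENNReal.ofReal ((Real.pi / 2) ^ D) := by
    rw [← lint_gw, ← h2, ← lintegral_const_mul _ hgw, ← lintegral_const_mul _ (by fun_prop),
      ← lintegral_add_left (by fun_prop)]
    apply lintegral_mono
    intro g
    have hg := hnn g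
    simp only [gw]
    rw [← ENNReal.ofReal_mul (by positivity), ← ENNReal.ofReal_mul (by positivity),
      ← ENNReal.ofReal_mul (by positivity), ← ENNReal.ofReal_add (by positivity) (by positivity)]
    exact ENNReal.ofReal_le_ofReal (hpt _ hg)
  rw [← ENNReal.ofReal_mul (by positivity), ← ENNReal.ofReal_mul (by positivity),
    ← tsub_le_iff_right, ← ENNReal.ofReal_sub _ (by positivity)] at key
  refine le_trans (ENNReal.ofReal_le_ofReal ?_) key
  have h3 : Real.exp ((D:ℝ) / 2) * (Real.pi / 2) ^ D ≤ 3 / 4 * Real.pi ^ D := by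
    have e1 : Real.exp ((D:ℝ) / 2) = Real.exp (1 / 2) ^ D := by
      rw [← Real.exp_nat_mul]; congr 1; ring
    have e2 : (Real.exp (1 / 2)) ^ 2 = Real.exp 1 := by
      rw [← Real.exp_nat_mul]; congr 1; norm_num
    have e3 := Real.exp_one_lt_d9
    have e4 : 0 < Real.exp (1 / 2) := Real.exp_pos _
    have e5 : Real.exp (1 / 2) / 2 ≤ 1 := by nlinarith
    have e6 : (Real.exp (1 / 2) / 2) ^ D ≤ 3 / 4 := by
      refine (pow_le_pow_of_le_one (by positivity) e5 hD).trans ?_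
      rw [div_pow, e2]; linarith
    calc Real.exp ((D:ℝ) / 2) * (Real.pi / 2) ^ D = (Real.exp (1 / 2) / 2) ^ D * Real.pi ^ D := by
          rw [e1, div_pow, div_pow]; ring
      _ ≤ _ := by gcongr
  have h4 : ((D:ℝ) / 2) ^ n * (Real.exp ((D:ℝ) / 2) * (Real.pi / 2) ^ D) ≤
      ((D:ℝ) / 2) ^ n * (3 / 4 * Real.pi ^ D) := by gcongr
  linarith

/-! ### Averaging over the unitary group -/

lemma nsq_smul {D : ℕ} (c : ℂ) (v : Fin D → ℂ) : nsq (c • v) = ‖c‖ ^ 2 * nsq v := by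
  simp [nsq, mul_pow, Finset.mul_sum]

lemma qf_smul {D : ℕ} (s : Finset (Fin D)) (c : ℂ) (v : Fin D → ℂ) :
    qf s (c • v) = ‖c‖ ^ 2 * qf s v := by
  simp only [qf, nsq_smul, mul_sub, Finset.mul_sum]
  simp [mul_pow]
  ring

lemma avg_unit {D : ℕ} (μ : Measure (UG D)) [μ.IsHaarMeasure] (f : (Fin D → ℂ) → ENNReal)
    (v w : Fin D → ℂ) (hv : nsq v = 1) (hw : nsq w = 1) :
    ∫⁻ U, f (act U v) ∂μ = ∫⁻ U, f (act U w) ∂μ := by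
  obtain ⟨V, hV⟩ := exists_unitary v w hv hw
  rw [← hV]
  simp_rw [← act_mul]
  exact (lintegral_mul_left_eq_self (fun U => f (act U v)) V).symm

lemma avg_any {D : ℕ} (μ : Measure (UG D)) [μ.IsHaarMeasure] (s : Finset (Fin D)) (p : ℕ)
    (v w : Fin D → ℂ) (hv : nsq v = 1) :
    ∫⁻ U, ENNReal.ofReal (qf s (act U w) ^ (2 * p)) ∂μ =
      ENNReal.ofReal (nsq w ^ (2 * p)) * ∫⁻ U, ENNReal.ofReal (qf s (act U v) ^ (2 * p)) ∂μ := by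
  have hnn : 0 ≤ nsq w := Finset.sum_nonneg fun i _ => by positivity
  set r : ℂ := ((Real.sqrt (nsq w) : ℝ) : ℂ) with hr
  have hr2 : ‖r‖ ^ 2 = nsq w := by
    rw [hr, Complex.norm_real, Real.norm_eq_abs, sq_abs, Real.sq_sqrt hnn]
  obtain ⟨u, hu, hwu⟩ : ∃ u : Fin D → ℂ, nsq u = 1 ∧ w = r • u := by
    rcases eq_or_lt_of_le hnn with h0 | h0
    · refine ⟨v, hv, ?_⟩
      have : r = 0 := by rw [hr, ← h0]; simp
      rw [this, zero_smul]
      ext i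
      have := (Finset.sum_eq_zero_iff_of_nonneg (fun i _ => by positivity)).1 h0.symm i (Finset.mem_univ i)
      simpa using this
    · have hr0 : r ≠ 0 := by
        intro h; rw [h] at hr2; simp at hr2; linarith
      refine ⟨r⁻¹ • w, ?_, by rw [smul_smul, mul_inv_cancel₀ hr0, one_smul]⟩
      rw [nsq_smul, norm_inv, inv_pow, hr2, inv_mul_cancel₀ h0.ne']
  have e : ∀ U : UG D, ENNReal.ofReal (qf s (act U w) ^ (2 * p)) =
      ENNReal.ofReal (nsq w ^ (2 * p)) * ENNReal.ofReal (qf s (act U u) ^ (2 * p)) := by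
    intro U
    rw [← ENNReal.ofReal_mul (by positivity), hwu, act_smul, qf_smul, ← hwu, hr2, mul_pow]
  simp_rw [e]
  rw [lintegral_const_mul' _ _ ENNReal.ofReal_ne_top,
    avg_unit μ (fun x => ENNReal.ofReal (qf s x ^ (2 * p))) u v hu hv]

lemma moment {D : ℕ} (hD : 2 ≤ D) (μ : Measure (UG D)) [μ.IsHaarMeasure] [IsProbabilityMeasure μ]
    (s : Finset (Fin D)) (p : ℕ) (hp : 1 ≤ p) (hps : 4 * p ≤ s.card)
    (v : Fin D → ℂ) (hv : nsq v = 1) :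
    ∫⁻ U, ENNReal.ofReal (qf s (act U v) ^ (2 * p)) ∂μ ≤
      ENNReal.ofReal (8 * (48 * p * s.card / (D:ℝ) ^ 2) ^ p) := by
  have hD0 : (0:ℝ) < D := by exact_mod_cast (by omega : 0 < D)
  have hq := (continuous_qf s).measurable
  have hns : Measurable (nsq (D := D)) := by unfold nsq; fun_prop
  have hgw := measurable_gw (D := D)
  set c := ∫⁻ U, ENNReal.ofReal (qf s (act U v) ^ (2 * p)) ∂μ with hc
  have h1 : ∫⁻ g : Fin D → ℂ, ENNReal.ofReal (qf s g ^ (2 * p)) * gw g =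
      (∫⁻ g : Fin D → ℂ, ENNReal.ofReal (nsq g ^ (2 * p)) * gw g) * c := by
    calc ∫⁻ g : Fin D → ℂ, ENNReal.ofReal (qf s g ^ (2 * p)) * gw g
        = ∫⁻ _U, (∫⁻ g : Fin D → ℂ, ENNReal.ofReal (qf s g ^ (2 * p)) * gw g) ∂μ := by simp
      _ = ∫⁻ U, (∫⁻ g : Fin D → ℂ, ENNReal.ofReal (qf s (act U g) ^ (2 * p)) * gw g) ∂μ := by
          refine lintegral_congr fun U => ?_
          exact (lint_act U (fun g => ENNReal.ofReal (qf s g ^ (2 * p))) (by fun_prop)).symm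
      _ = ∫⁻ g : Fin D → ℂ, (∫⁻ U, ENNReal.ofReal (qf s (act U g) ^ (2 * p)) * gw g ∂μ) := by
          symm
          apply lintegral_lintegral_swap
          have h := (continuous_act_uncurry (D := D)).measurable
          exact (((hq.comp h).pow_const _).ennreal_ofReal.mul (hgw.comp measurable_fst)).aemeasurable
      _ = ∫⁻ g : Fin D → ℂ, (ENNReal.ofReal (nsq g ^ (2 * p)) * gw g) * c := by
          refine lintegral_congr fun g => ?_
          rw [lintegral_mul_const' _ _ (by unfold gw; exact ENNReal.ofReal_ne_top),
            avg_any μ s p v g hv]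
          ring
      _ = _ := by
          rw [lintegral_mul_const _ (by fun_prop)]
  have h2 := upper_p (by omega) s p hp hps
  rw [h1] at h2
  have h3 := lower_n hD (2 * p)
  have hA : 0 < ((D:ℝ) / 2) ^ (2 * p) * Real.pi ^ D / 4 := by positivity
  have h4 : ENNReal.ofReal (((D:ℝ) / 2) ^ (2 * p) * Real.pi ^ D / 4) * c ≤
      ENNReal.ofReal (((D:ℝ) / 2) ^ (2 * p) * Real.pi ^ D / 4) *
        ENNReal.ofReal (8 * (48 * p * s.card / (D:ℝ) ^ 2) ^ p) := by
    refine (mul_le_mul_left h3 c).trans (h2.trans (le_of_eq ?_))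
    rw [← ENNReal.ofReal_mul hA.le]
    congr 1
    have : (12 * (p:ℝ) * s.card) ^ p = ((D:ℝ) / 2) ^ (2 * p) * (48 * p * s.card / (D:ℝ) ^ 2) ^ p := by
      rw [pow_mul, ← mul_pow]; congr 1; field_simp; ring
    rw [this]; ring
  exact (ENNReal.mul_le_mul_iff_right (by simpa using hA) ENNReal.ofReal_ne_top).1 h4

lemma continuous_act_left {D : ℕ} (v : Fin D → ℂ) : Continuous (fun U : UG D => act U v) := by
  unfold act
  refine Continuous.matrix_mulVec ?_ continuous_const
  exact continuous_subtype_val.comp continuous_inv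

lemma measurable_qf_act {D : ℕ} (s : Finset (Fin D)) (v : Fin D → ℂ) (n : ℕ) :
    Measurable (fun U : UG D => qf s (act U v) ^ n) := by
  have h2 : Continuous (fun U : UG D => qf s (act U v)) :=
    (continuous_qf s).comp (continuous_act_left v)
  have h3 := h2.measurable
  exact h3.pow_const n

lemma of_lint {X : Type*} [MeasurableSpace X] (μ : Measure X) (f : X → ℝ) (hf : Measurable f)
    (hnn : ∀ x, 0 ≤ f x) (B : ℝ) (hB : 0 ≤ B)
    (h : ∫⁻ x, ENNReal.ofReal (f x) ∂μ ≤ ENNReal.ofReal B) :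
    Integrable f μ ∧ ∫ x, f x ∂μ ≤ B := by
  refine ⟨⟨hf.aestronglyMeasurable, ?_⟩, ?_⟩
  · rw [hasFiniteIntegral_iff_ofReal (Eventually.of_forall hnn)]
    exact h.trans_lt ENNReal.ofReal_lt_top
  · rw [integral_eq_lintegral_of_nonneg_ae (Eventually.of_forall hnn) hf.aestronglyMeasurable]
    exact ENNReal.toReal_le_of_le_ofReal hB h

lemma moment_int {D : ℕ} (hD : 2 ≤ D) (μ : Measure (UG D)) [μ.IsHaarMeasure]
    [IsProbabilityMeasure μ]
    (s : Finset (Fin D)) (p : ℕ) (hp : 1 ≤ p) (hps : 4 * p ≤ s.card)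
    (v : Fin D → ℂ) (hv : nsq v = 1) :
    Integrable (fun U => qf s (act U v) ^ (2 * p)) μ ∧
    ∫ U, qf s (act U v) ^ (2 * p) ∂μ ≤ 8 * (48 * p * s.card / (D:ℝ) ^ 2) ^ p :=
  of_lint μ _ (measurable_qf_act s v (2 * p)) (fun U => by rw [pow_mul]; positivity) _
    (by positivity) (moment hD μ s p hp hps v hv)

/-! ### Polarization -/

/-- The partial inner product. -/
def sB {D : ℕ} (s : Finset (Fin D)) (x y : Fin D → ℂ) : ℂ :=
  ∑ i ∈ s, (starRingEnd ℂ) (x i) * y i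

lemma bil_eq {D : ℕ} (U : UG D) (s : Finset (Fin D)) (x y : Fin D → ℂ) :
    dotc x ((rotProj U (coordProj D s)).mulVec y) = sB s (act U x) (act U y) := by
  have h : (rotProj U (coordProj D s)).mulVec y =
      act U⁻¹ ((coordProj D s).mulVec (act U y)) := by
    simp only [rotProj, act, inv_inv, Matrix.mulVec_mulVec, Matrix.mul_assoc]
  rw [← dotc_act U x, h, act_inv']
  simp [dotc, sB, coordProj, Matrix.mulVec_diagonal]

lemma sB_self {D : ℕ} (s : Finset (Fin D)) (x : Fin D → ℂ) :
    sB s x x = ((∑ i ∈ s, ‖x i‖ ^ 2 : ℝ) : ℂ) := by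
  simp [sB, Complex.conj_mul']

lemma sum_polar {D : ℕ} (s : Finset (Fin D)) (x y : Fin D → ℂ) (c : ℂ) (hc : ‖c‖ = 1) :
    ∑ i ∈ s, ‖(x + c • y) i‖ ^ 2 =
      ∑ i ∈ s, ‖x i‖ ^ 2 + ∑ i ∈ s, ‖y i‖ ^ 2 + 2 * (c * sB s x y).re := by
  rw [sB, Finset.mul_sum, Complex.re_sum, Finset.mul_sum, ← Finset.sum_add_distrib,
    ← Finset.sum_add_distrib]
  refine Finset.sum_congr rfl fun i _ => ?_
  have h1 : ‖c‖ ^ 2 = 1 := by rw [hc]; norm_num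
  have h2 : ‖y i‖ ^ 2 = ‖c‖ ^ 2 * ‖y i‖ ^ 2 := by rw [h1, one_mul]
  rw [h2]
  simp only [Pi.add_apply, Pi.smul_apply, smul_eq_mul, Complex.sq_norm, Complex.normSq_apply,
    Complex.add_re, Complex.add_im, Complex.mul_re, Complex.mul_im, Complex.conj_re, Complex.conj_im]
  ring

/-- The normalization factor. -/
def rh : ℂ := ((Real.sqrt (1 / 2) : ℝ) : ℂ)

lemma rh_sq : ‖rh‖ ^ 2 = 1 / 2 := by
  rw [rh, Complex.norm_real, Real.norm_eq_abs, sq_abs, Real.sq_sqrt (by norm_num)]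

lemma nsq_polar {D : ℕ} (x y : Fin D → ℂ) (c : ℂ) (hc : ‖c‖ = 1) (hx : nsq x = 1) (hy : nsq y = 1)
    (hxy : dotc x y = 0) : nsq (x + c • y) = 2 := by
  have h := sum_polar Finset.univ x y c hc
  change nsq (x + c • y) = nsq x + nsq y + 2 * (c * dotc x y).re at h
  rw [h, hx, hy, hxy]; simp; norm_num

lemma nsq_unit {D : ℕ} (x y : Fin D → ℂ) (c : ℂ) (hc : ‖c‖ = 1) (hx : nsq x = 1) (hy : nsq y = 1)
    (hxy : dotc x y = 0) : nsq (rh • (x + c • y)) = 1 := by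
  rw [nsq_smul, rh_sq, nsq_polar x y c hc hx hy hxy]; norm_num

lemma qf_polar {D : ℕ} (s : Finset (Fin D)) (x y : Fin D → ℂ) (c : ℂ) (hc : ‖c‖ = 1)
    (hx : nsq x = 1) (hy : nsq y = 1) (hxy : dotc x y = 0) :
    qf s (rh • (x + c • y)) = (qf s x + qf s y) / 2 + (c * sB s x y).re := by
  rw [qf_smul, rh_sq, qf, sum_polar s x y c hc, nsq_polar x y c hc hx hy hxy, qf, qf, hx, hy]
  ring

/-- The four directions. -/
def cdir (k : Fin 4) : ℂ := ![1, -1, Complex.I, -Complex.I] k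

lemma norm_cdir (k : Fin 4) : ‖cdir k‖ = 1 := by
  fin_cases k <;> simp [cdir]

lemma norm_sB_le {D : ℕ} (s : Finset (Fin D)) (x y : Fin D → ℂ)
    (hx : nsq x = 1) (hy : nsq y = 1) (hxy : dotc x y = 0) :
    ‖sB s x y‖ ^ 2 ≤ 1 / 2 * ∑ k, qf s (rh • (x + cdir k • y)) ^ 2 := by
  have h : ∀ k, qf s (rh • (x + cdir k • y)) = (qf s x + qf s y) / 2 + (cdir k * sB s x y).re :=
    fun k => qf_polar s x y _ (norm_cdir k) hx hy hxy
  simp_rw [h]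
  rw [Fin.sum_univ_four, Complex.sq_norm, Complex.normSq_apply]
  simp [cdir]
  nlinarith [sq_nonneg (qf s x + qf s y)]

/-- The family of unit test vectors. -/
def tv {D : ℕ} (φ : Fin D → Fin D → ℂ) (j : Fin D × Fin D × Fin 4) : Fin D → ℂ :=
  if j.1 = j.2.1 then φ j.1 else rh • (φ j.1 + cdir j.2.2 • φ j.2.1)

lemma nsq_one {D : ℕ} (φ : Fin D → Fin D → ℂ)
    (hφ : ∀ α β, dotc (φ α) (φ β) = if α = β then 1 else 0) (α : Fin D) : nsq (φ α) = 1 := by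
  have := hφ α α
  rw [← nsq_eq, if_pos rfl] at this
  exact_mod_cast this

lemma nsq_tv {D : ℕ} (φ : Fin D → Fin D → ℂ)
    (hφ : ∀ α β, dotc (φ α) (φ β) = if α = β then 1 else 0) (j) : nsq (tv φ j) = 1 := by
  unfold tv
  split_ifs with h
  · exact nsq_one φ hφ _
  · exact nsq_unit _ _ _ (norm_cdir _) (nsq_one φ hφ _) (nsq_one φ hφ _) (by rw [hφ, if_neg h])

lemma young (y t : ℝ) (hy : 0 ≤ y) (ht : 0 < t) (p : ℕ) (hp : 1 ≤ p) :
    y ≤ t + t * (y / t) ^ p := by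
  have h : y / t ≤ 1 + (y / t) ^ p := by
    have h0 : 0 ≤ y / t := by positivity
    rcases le_total (y / t) 1 with h | h
    · have : 0 ≤ (y / t) ^ p := by positivity
      linarith
    · have := le_self_pow₀ h (by omega : p ≠ 0)
      linarith
  calc y = t * (y / t) := by field_simp
    _ ≤ t * (1 + (y / t) ^ p) := by gcongr
    _ = _ := by ring

lemma pointwise {D : ℕ} (φ : Fin D → Fin D → ℂ)
    (hφ : ∀ α β, dotc (φ α) (φ β) = if α = β then 1 else 0) (s : Finset (Fin D))
    (U : UG D) (t : ℝ) (ht : 0 < t) (p : ℕ) (hp : 1 ≤ p) :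
    ((⨆ α, ⨆ β, ⨆ _ : α ≠ β,
          ‖dotc (φ α) ((rotProj U (coordProj D s)).mulVec (φ β))‖ ^ 2) +
        ⨆ α, ‖dotc (φ α) ((rotProj U (coordProj D s)).mulVec (φ α)) - (s.card : ℂ) / D‖ ^ 2) ≤
      3 * t + 3 / 2 * t / t ^ p * ∑ j, qf s (act U (tv φ j)) ^ (2 * p) := by
  have hY : ∀ j, qf s (act U (tv φ j)) ^ 2 ≤ t + t / t ^ p * qf s (act U (tv φ j)) ^ (2 * p) := by
    intro j
    refine (young _ t (sq_nonneg _) ht p hp).trans (le_of_eq ?_)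
    rw [div_pow, ← pow_mul]; ring
  set S := ∑ j, qf s (act U (tv φ j)) ^ (2 * p) with hS
  have hnn : ∀ j, 0 ≤ qf s (act U (tv φ j)) ^ (2 * p) := fun j => by rw [pow_mul]; positivity
  have hS0 : 0 ≤ S := Finset.sum_nonneg fun j _ => hnn j
  have hk : 0 ≤ t / t ^ p := by positivity
  have hdiag : (⨆ α, ‖dotc (φ α) ((rotProj U (coordProj D s)).mulVec (φ α)) - (s.card : ℂ) / D‖ ^ 2) ≤
      t + t / t ^ p * S := by
    refine Real.iSup_le (fun α => ?_) (by positivity)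
    have h1 : dotc (φ α) ((rotProj U (coordProj D s)).mulVec (φ α)) - (s.card : ℂ) / D =
        ((qf s (act U (tv φ (α, α, 0))) : ℝ) : ℂ) := by
      rw [bil_eq, sB_self, qf, nsq_act, nsq_tv φ hφ]
      simp [tv]
    rw [h1, Complex.norm_real, Real.norm_eq_abs, sq_abs]
    refine (hY _).trans ?_
    gcongr
    exact Finset.single_le_sum (fun j _ => hnn j) (Finset.mem_univ _)
  have hoff : (⨆ α, ⨆ β, ⨆ _ : α ≠ β,
          ‖dotc (φ α) ((rotProj U (coordProj D s)).mulVec (φ β))‖ ^ 2) ≤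
      2 * t + 1 / 2 * (t / t ^ p) * S := by
    have h0 : 0 ≤ 2 * t + 1 / 2 * (t / t ^ p) * S := by positivity
    refine Real.iSup_le (fun α => Real.iSup_le (fun β => Real.iSup_le (fun hab => ?_) h0) h0) h0
    rw [bil_eq]
    have h1 := norm_sB_le s (act U (φ α)) (act U (φ β)) (by rw [nsq_act, nsq_one φ hφ])
      (by rw [nsq_act, nsq_one φ hφ]) (by rw [dotc_act, hφ, if_neg hab])
    refine h1.trans ?_
    have h2 : ∀ k, rh • (act U (φ α) + cdir k • act U (φ β)) = act U (tv φ (α, β, k)) := by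
      intro k
      simp only [tv, if_neg hab, act_smul, act_add]
    simp_rw [h2]
    have h3 : ∑ k, qf s (act U (tv φ (α, β, k))) ^ (2 * p) ≤ S := by
      rw [hS, Fintype.sum_prod_type]
      refine le_trans ?_ (Finset.single_le_sum (f := fun a => ∑ y : Fin D × Fin 4,
        qf s (act U (tv φ (a, y))) ^ (2 * p))
        (fun a _ => Finset.sum_nonneg fun y _ => hnn _) (Finset.mem_univ α))
      rw [Fintype.sum_prod_type]
      exact Finset.single_le_sum (f := fun b => ∑ y : Fin 4,
        qf s (act U (tv φ (α, b, y))) ^ (2 * p))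
        (fun a _ => Finset.sum_nonneg fun y _ => hnn _) (Finset.mem_univ β)
    calc 1 / 2 * ∑ k, qf s (act U (tv φ (α, β, k))) ^ 2
        ≤ 1 / 2 * ∑ k, (t + t / t ^ p * qf s (act U (tv φ (α, β, k))) ^ (2 * p)) := by
          gcongr with k; exact hY _
      _ = 2 * t + 1 / 2 * (t / t ^ p) * ∑ k, qf s (act U (tv φ (α, β, k))) ^ (2 * p) := by
          rw [Finset.sum_add_distrib, ← Finset.mul_sum]
          simp only [Finset.sum_const, Finset.card_univ, Fintype.card_fin]
          ring
      _ ≤ _ := by gcongr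
  calc _ ≤ (2 * t + 1 / 2 * (t / t ^ p) * S) + (t + t / t ^ p * S) := add_le_add hoff hdiag
    _ = _ := by ring

lemma main_bound {D : ℕ} (hD : 2 ≤ D) (φ : Fin D → Fin D → ℂ)
    (hφ : ∀ α β, dotc (φ α) (φ β) = if α = β then 1 else 0) (s : Finset (Fin D))
    (μ : Measure (UG D)) [μ.IsHaarMeasure] [IsProbabilityMeasure μ]
    (t : ℝ) (ht : 0 < t) (p : ℕ) (hp : 1 ≤ p) (hps : 4 * p ≤ s.card) :
    (∫ U, ((⨆ α, ⨆ β, ⨆ _ : α ≠ β,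
          ‖dotc (φ α) ((rotProj U (coordProj D s)).mulVec (φ β))‖ ^ 2) +
        ⨆ α, ‖dotc (φ α) ((rotProj U (coordProj D s)).mulVec (φ α)) - (s.card : ℂ) / D‖ ^ 2) ∂μ) ≤
      3 * t + 48 * t * (D:ℝ) ^ 2 * (48 * p * s.card / (D:ℝ) ^ 2 / t) ^ p := by
  have hm := fun j => moment_int hD μ s p hp hps (tv φ j) (nsq_tv φ hφ j)
  have hI : Integrable (fun U => ∑ j, qf s (act U (tv φ j)) ^ (2 * p)) μ :=
    integrable_finsetSum _ fun j _ => (hm j).1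
  calc _ ≤ ∫ U, (3 * t + 3 / 2 * t / t ^ p * ∑ j, qf s (act U (tv φ j)) ^ (2 * p)) ∂μ := by
        refine integral_mono_of_nonneg (Eventually.of_forall fun U => ?_)
          ((integrable_const _).add (hI.const_mul _))
          (Eventually.of_forall fun U => pointwise φ hφ s U t ht p hp)
        refine add_nonneg ?_ (Real.iSup_nonneg fun α => by positivity)
        exact Real.iSup_nonneg fun α => Real.iSup_nonneg fun β => Real.iSup_nonneg fun _ => by positivity
    _ = 3 * t + 3 / 2 * t / t ^ p * ∑ j, ∫ U, qf s (act U (tv φ j)) ^ (2 * p) ∂μ := by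
        rw [integral_add (integrable_const _) (hI.const_mul _), integral_const, integral_const_mul,
          integral_finsetSum _ fun j _ => (hm j).1]
        simp
    _ ≤ 3 * t + 3 / 2 * t / t ^ p *
          ∑ _j : Fin D × Fin D × Fin 4, 8 * (48 * p * s.card / (D:ℝ) ^ 2) ^ p := by
        gcongr with j
        exact (hm j).2
    _ = _ := by
        simp only [Finset.sum_const, Finset.card_univ, Fintype.card_prod, Fintype.card_fin]
        rw [div_pow _ t]
        push_cast
        simp only [nsmul_eq_mul]
        push_cast
        ring

/-- The fundamental technical lemma. -/
theorem stmt2 :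
    ∃ C₁ : ℝ, 0 < C₁ ∧
      ∀ (D d : ℕ), 2 ≤ D →
      ∀ φ : Fin D → Fin D → ℂ, (∀ α β, dotc (φ α) (φ β) = if α = β then 1 else 0) →
      ∀ s : Finset (Fin D), s.card = d →
      C₁ * Real.log D < d → (d : ℝ) < D / C₁ →
      ∀ (μ : Measure (UG D)), μ.IsHaarMeasure → IsProbabilityMeasure μ →
      (∫ U, ((⨆ α, ⨆ β, ⨆ _ : α ≠ β,
          ‖dotc (φ α) ((rotProj U (coordProj D s)).mulVec (φ β))‖ ^ 2) +
        ⨆ α, ‖dotc (φ α) ((rotProj U (coordProj D s)).mulVec (φ α)) - (d : ℂ) / D‖ ^ 2) ∂μ)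
        < 10 * Real.log D / D := by
  refine ⟨1000000, by norm_num, ?_⟩
  intro D d hD φ hφ s hs hd1 hd2 μ hμ hμp
  subst hs
  have hD2 : (2:ℝ) ≤ D := by exact_mod_cast hD
  have hD0 : (0:ℝ) < D := by linarith
  set L := Real.log D with hL
  have hL2 : (0.69:ℝ) ≤ L := by
    have h1 : Real.log 2 ≤ L := Real.log_le_log (by norm_num) hD2
    have := Real.log_two_gt_d9
    linarith
  set p := ⌈L⌉₊ with hpdef
  have hLp : L ≤ p := Nat.le_ceil L
  have hpL : (p:ℝ) ≤ 2.5 * L := by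
    have := Nat.ceil_lt_add_one (by linarith : 0 ≤ L)
    linarith
  have hp : 1 ≤ p := Nat.one_le_ceil_iff.2 (by linarith)
  have hp0 : (0:ℝ) < p := by exact_mod_cast hp
  have hs0 : (0:ℝ) < s.card := by linarith
  have hps : 4 * p ≤ s.card := by
    have : (4:ℝ) * p ≤ s.card := by linarith
    exact_mod_cast this
  set M : ℝ := 48 * p * s.card / (D:ℝ) ^ 2 with hM
  have hM0 : 0 < M := by positivity
  have hE7 : Real.exp 7 ≤ 3 ^ 7 := by
    have : Real.exp 7 = Real.exp 1 ^ 7 := by rw [← Real.exp_nat_mul]; norm_num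
    rw [this]
    gcongr
    exact Real.exp_one_lt_d9.le.trans (by norm_num)
  have hE0 := Real.exp_pos 7
  refine (main_bound hD φ hφ s μ (Real.exp 7 * M) (by positivity) p hp hps).trans_lt ?_
  have h1 : (48 * p * s.card / (D:ℝ) ^ 2 / (Real.exp 7 * M)) ^ p ≤ ((D:ℝ) ^ 7)⁻¹ := by
    rw [← hM]
    have e1 : M / (Real.exp 7 * M) = (Real.exp 7)⁻¹ := by field_simp
    rw [e1, inv_pow]
    have e2 : (D:ℝ) ^ 7 ≤ Real.exp 7 ^ p := by
      rw [← Real.exp_log hD0, ← Real.exp_nat_mul, ← Real.exp_nat_mul, ← hL]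
      apply Real.exp_le_exp.2
      push_cast
      linarith
    exact inv_anti₀ (by positivity) e2
  have h2 : (D:ℝ) ^ 2 * ((D:ℝ) ^ 7)⁻¹ ≤ 1 / 32 := by
    have e : (D:ℝ) ^ 2 * ((D:ℝ) ^ 7)⁻¹ = ((D:ℝ) ^ 5)⁻¹ := by field_simp
    rw [e, one_div]
    apply inv_anti₀ (by norm_num)
    calc (32:ℝ) = 2 ^ 5 := by norm_num
      _ ≤ _ := by gcongr
  have h3 : M ≤ 48 * (2.5 * L) * (1 / 1000000) / D := by
    have : M = 48 * p * (s.card / D) / D := by rw [hM]; field_simp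
    rw [this]
    have h4 : (s.card : ℝ) / D ≤ 1 / 1000000 := by
      rw [div_le_iff₀ hD0]; linarith
    gcongr
  calc 3 * (Real.exp 7 * M) + 48 * (Real.exp 7 * M) * (D:ℝ) ^ 2 *
        (48 * p * s.card / (D:ℝ) ^ 2 / (Real.exp 7 * M)) ^ p
      ≤ 3 * (Real.exp 7 * M) + 48 * (Real.exp 7 * M) * (D:ℝ) ^ 2 * ((D:ℝ) ^ 7)⁻¹ := by gcongr
    _ = Real.exp 7 * M * (3 + 48 * ((D:ℝ) ^ 2 * ((D:ℝ) ^ 7)⁻¹)) := by ring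
    _ ≤ 3 ^ 7 * (48 * (2.5 * L) * (1 / 1000000) / D) * (3 + 48 * (1 / 32)) := by gcongr
    _ = (3 ^ 7 * (48 * 2.5 * (1 / 1000000)) * (3 + 48 * (1 / 32))) * (L / D) := by ring
    _ < 10 * (L / D) := by
        have : 0 < L / D := by apply div_pos <;> linarith
        apply mul_lt_mul_of_pos_right _ this
        norm_num
    _ = 10 * L / D := by ring
end
end

section
/- Let P be an orthogonal projection of rank d on ℂ^D (1 ≤ d ≤ D), and let w_S be the unique unitarily invariant Borel probability measure on the unit sphere S of ℂ^D. Then ∫_S ( ‖P φ‖² − d/D )² dw_S(φ) = d·(D − d)/(D²·(D+1)). -/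
open MeasureTheory Filter

noncomputable section

lemma aux_nsq_eq {D : ℕ} (v : Fin D → ℂ) : ((nsq v : ℝ) : ℂ) = star v ⬝ᵥ v := by
  simp only [nsq, dotProduct, Pi.star_apply, RCLike.star_def, Complex.conj_mul']
  push_cast
  rfl

lemma aux_nsq_unitary {D : ℕ} (U : UG D) (v : Fin D → ℂ) :
    nsq ((U : Matrix (Fin D) (Fin D) ℂ).mulVec v) = nsq v := by
  have h : ((nsq ((U : Matrix (Fin D) (Fin D) ℂ).mulVec v) : ℝ) : ℂ) = (nsq v : ℝ) := by
    rw [aux_nsq_eq, aux_nsq_eq, Matrix.star_mulVec, ← Matrix.dotProduct_mulVec,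
      Matrix.mulVec_mulVec]
    have := Unitary.coe_star_mul_self U
    rw [← Matrix.star_eq_conjTranspose, this, Matrix.one_mulVec]
  exact_mod_cast h

lemma aux_int_inv {D : ℕ} (w : Measure (Fin D → ℂ))
    (hinv : ∀ U : UG D,
      Measure.map (fun v => (U : Matrix (Fin D) (Fin D) ℂ).mulVec v) w = w) (U : UG D)
    (f : (Fin D → ℂ) → ℝ) (hf : Continuous f) :
    ∫ v, f ((U : Matrix (Fin D) (Fin D) ℂ).mulVec v) ∂w = ∫ v, f v ∂w := by
  have hc : Continuous (fun v => (U : Matrix (Fin D) (Fin D) ℂ).mulVec v) :=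
    Continuous.matrix_mulVec continuous_const continuous_id
  conv_rhs => rw [← hinv U]
  rw [integral_map hc.aemeasurable hf.aestronglyMeasurable]

/-- a two-dimensional reflection in the coordinates i, j -/
def auxRefl {D : ℕ} (i j : Fin D) (a : ℝ) (b : ℂ) : (Fin D → ℂ) →ₗ[ℂ] (Fin D → ℂ) where
  toFun v := fun k => if k = i then a * v i + star b * v j
    else if k = j then b * v i - a * v j else v k
  map_add' x y := by
    ext k
    simp only [Pi.add_apply]
    split_ifs <;> ring
  map_smul' c x := by
    ext k
    simp only [Pi.smul_apply, smul_eq_mul, RingHom.id_apply]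
    split_ifs <;> ring

lemma auxRefl_unitary {D : ℕ} (i j : Fin D) (hij : i ≠ j) (a : ℝ) (b : ℂ)
    (h : (a : ℂ) ^ 2 + star b * b = 1) :
    LinearMap.toMatrix' (auxRefl i j a b) ∈ Matrix.unitaryGroup (Fin D) ℂ := by
  rw [Matrix.mem_unitaryGroup_iff]
  have hs : star (LinearMap.toMatrix' (auxRefl i j a b)) = LinearMap.toMatrix' (auxRefl i j a b) := by
    ext k l
    rw [Matrix.star_apply, LinearMap.toMatrix'_apply, LinearMap.toMatrix'_apply]
    simp only [auxRefl, LinearMap.coe_mk, AddHom.coe_mk, Pi.single_apply]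
    clear h
    by_cases h1 : k = i <;> by_cases h2 : k = j <;> by_cases h3 : l = i <;> by_cases h4 : l = j <;>
      simp_all [eq_comm, apply_ite]
  rw [hs, ← LinearMap.toMatrix'_comp, ← LinearMap.toMatrix'_id]
  congr 1
  refine LinearMap.ext fun v => ?_
  ext k
  simp only [auxRefl, LinearMap.comp_apply, LinearMap.coe_mk, AddHom.coe_mk, LinearMap.id_apply,
    hij.symm, if_true, if_false]
  split_ifs with h1 h2
  · rw [h1]; linear_combination v i * h
  · rw [h2]; linear_combination v j * h
  · rfl

lemma aux_refl_int {D : ℕ} (w : Measure (Fin D → ℂ))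
    (hinv : ∀ U : UG D,
      Measure.map (fun v => (U : Matrix (Fin D) (Fin D) ℂ).mulVec v) w = w)
    (i j : Fin D) (hij : i ≠ j) (a : ℝ) (b : ℂ)
    (h : (a : ℂ) ^ 2 + star b * b = 1) (f : ℂ → ℂ → ℝ)
    (hf : Continuous (fun p : ℂ × ℂ => f p.1 p.2)) :
    ∫ v, f (a * v i + star b * v j) (b * v i - a * v j) ∂w = ∫ v, f (v i) (v j) ∂w := by
  have := aux_int_inv w hinv ⟨_, auxRefl_unitary i j hij a b h⟩ (fun v => f (v i) (v j)) (by
    exact hf.comp (by fun_prop : Continuous (fun v : Fin D → ℂ => (v i, v j))))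
  rw [← this]
  congr 1
  ext v
  simp only [LinearMap.toMatrix'_mulVec]
  simp [auxRefl, hij.symm]

lemma aux_integrable {D : ℕ} (w : Measure (Fin D → ℂ)) [IsProbabilityMeasure w]
    (hsupp : w {v : Fin D → ℂ | nsq v = 1}ᶜ = 0) (f : (Fin D → ℂ) → ℝ) (hf : Continuous f) :
    Integrable f w := by
  have hK : IsCompact (Metric.closedBall (0 : Fin D → ℂ) 1) := isCompact_closedBall _ _
  obtain ⟨C, hC⟩ := hK.exists_bound_of_continuousOn hf.continuousOn
  refine Integrable.of_bound hf.aestronglyMeasurable C ?_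
  have : ∀ᵐ v ∂w, nsq v = 1 := by rw [ae_iff]; exact hsupp
  filter_upwards [this] with v hv
  apply hC
  rw [mem_closedBall_zero_iff, pi_norm_le_iff_of_nonneg zero_le_one]
  intro i
  have h1 : ‖v i‖ ^ 2 ≤ nsq v :=
    Finset.single_le_sum (f := fun i => ‖v i‖ ^ 2) (fun _ _ => by positivity) (Finset.mem_univ i)
  rw [hv] at h1
  exact (sq_le_one_iff₀ (norm_nonneg _)).1 h1

/-- the fourth moments -/
lemma aux_moments {D : ℕ} (hD : 1 ≤ D) (w : Measure (Fin D → ℂ)) [IsProbabilityMeasure w]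
    (hsupp : w {v : Fin D → ℂ | nsq v = 1}ᶜ = 0)
    (hinv : ∀ U : UG D,
      Measure.map (fun v => (U : Matrix (Fin D) (Fin D) ℂ).mulVec v) w = w) (i j : Fin D) :
    ∫ v, ‖v i‖ ^ 2 * ‖v j‖ ^ 2 ∂w = (if i = j then 2 else 1) / ((D : ℝ) * (D + 1)) := by
  have hI : ∀ f : (Fin D → ℂ) → ℝ, Continuous f → Integrable f w := aux_integrable w hsupp
  have hsw : ∀ i j : Fin D, ∫ v, ‖v i‖ ^ 2 * ‖v i‖ ^ 2 ∂w = ∫ v, ‖v j‖ ^ 2 * ‖v j‖ ^ 2 ∂w := by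
    intro i j
    by_cases hij : i = j
    · rw [hij]
    have := aux_refl_int w hinv i j hij 0 1 (by simp) (fun x _ => ‖x‖ ^ 2 * ‖x‖ ^ 2) (by fun_prop)
    simpa using this.symm
  have hoff : ∀ i j : Fin D, i ≠ j →
      ∫ v, ‖v i‖ ^ 2 * ‖v j‖ ^ 2 ∂w = (∫ v, ‖v i‖ ^ 2 * ‖v i‖ ^ 2 ∂w) / 2 := by
    intro i j hij
    have hc : ((Real.sqrt 2)⁻¹ : ℝ) ^ 2 = 1 / 2 := by
      rw [inv_pow, Real.sq_sqrt (by norm_num)]; norm_num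
    set c : ℝ := (Real.sqrt 2)⁻¹
    have hcc : (c : ℂ) ^ 2 = 1 / 2 := by
      rw [← Complex.ofReal_pow, hc]; norm_num
    have h1 := aux_refl_int w hinv i j hij c c
      (by simp only [RCLike.star_def, Complex.conj_ofReal]; linear_combination 2 * hcc)
      (fun x y => ‖x‖ ^ 2 * ‖y‖ ^ 2) (by fun_prop)
    have h2 := aux_refl_int w hinv i j hij c (c * Complex.I)
      (by simp only [RCLike.star_def, map_mul, Complex.conj_ofReal, Complex.conj_I]
          linear_combination 2 * hcc - c ^ 2 * Complex.I_sq)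
      (fun x y => ‖x‖ ^ 2 * ‖y‖ ^ 2) (by fun_prop)
    have h3 := hsw i j
    have h4 : (∫ v, ‖v i‖ ^ 2 * ‖v j‖ ^ 2 ∂w) + ∫ v, ‖v i‖ ^ 2 * ‖v j‖ ^ 2 ∂w =
        ((∫ v, ‖v i‖ ^ 2 * ‖v i‖ ^ 2 ∂w) + ∫ v, ‖v j‖ ^ 2 * ‖v j‖ ^ 2 ∂w) / 2 := by
      refine (congrArg₂ (· + ·) h1.symm h2.symm).trans ?_
      beta_reduce
      rw [← integral_add (hI _ (by fun_prop)) (hI _ (by fun_prop)),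
        ← integral_add (hI _ (by fun_prop)) (hI _ (by fun_prop)), ← integral_div]
      congr 1
      ext v
      have hc4 : c ^ 4 = 1 / 4 := by
        rw [show c ^ 4 = (c ^ 2) ^ 2 by ring, hc]; norm_num
      simp only [Complex.sq_norm, Complex.normSq_apply]
      simp only [RCLike.star_def, map_mul, Complex.conj_ofReal, Complex.conj_I, Complex.add_re,
        Complex.add_im, Complex.sub_re, Complex.sub_im, Complex.mul_re, Complex.mul_im,
        Complex.ofReal_re, Complex.ofReal_im, Complex.I_re, Complex.I_im, Complex.neg_re,
        Complex.neg_im]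
      linear_combination (2 * ((v i).re ^ 2 + (v i).im ^ 2) ^ 2 +
        2 * ((v j).re ^ 2 + (v j).im ^ 2) ^ 2) * hc4
    linarith
  set A := ∫ v, ‖v i‖ ^ 2 * ‖v i‖ ^ 2 ∂w with hA
  have hgen : ∀ k l : Fin D, ∫ v, ‖v k‖ ^ 2 * ‖v l‖ ^ 2 ∂w = A / 2 + if k = l then A / 2 else 0 := by
    intro k l
    by_cases hkl : k = l
    · subst hkl
      rw [hsw k i]; simp [← hA]
    · rw [hoff k l hkl, hsw k i]; simp [hkl, hA]
  have htot : ∑ k : Fin D, ∑ l : Fin D, ∫ v, ‖v k‖ ^ 2 * ‖v l‖ ^ 2 ∂w = 1 := by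
    have h1 : ∀ k : Fin D, ∑ l : Fin D, ∫ v, ‖v k‖ ^ 2 * ‖v l‖ ^ 2 ∂w
        = ∫ v, ∑ l : Fin D, ‖v k‖ ^ 2 * ‖v l‖ ^ 2 ∂w := fun k =>
      (integral_finsetSum _ (fun l _ => hI _ (by fun_prop))).symm
    simp_rw [h1]
    rw [← integral_finsetSum _ (fun l _ => hI _ (by fun_prop))]
    have : ∀ᵐ v ∂w, nsq v = 1 := by rw [ae_iff]; exact hsupp
    rw [integral_congr_ae (g := fun _ => (1 : ℝ))]
    · simp
    filter_upwards [this] with v hv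
    simp_rw [← Finset.mul_sum, ← Finset.sum_mul]
    change nsq v * nsq v = 1
    rw [hv]; norm_num
  simp_rw [hgen, Finset.sum_add_distrib] at htot
  simp at htot
  have hD' : (0 : ℝ) < D := by exact_mod_cast hD
  have hAv : A = 2 / ((D : ℝ) * (D + 1)) := by
    field_simp
    linarith
  rw [hgen i j, hAv]
  split_ifs <;> field_simp <;> norm_num

lemma aux_cont_nsq {D : ℕ} : Continuous (nsq : (Fin D → ℂ) → ℝ) := by
  unfold nsq
  fun_prop

lemma aux_diag {D : ℕ} (P : Matrix (Fin D) (Fin D) ℂ) (hP1 : P * P = P) (hP2 : P.IsHermitian) :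
    ∃ (U : UG D) (s : Finset (Fin D)), s.card = P.rank ∧
      ∀ v, nsq (P.mulVec v) = ∑ i ∈ s, ‖((U : Matrix (Fin D) (Fin D) ℂ).mulVec v) i‖ ^ 2 := by
  classical
  refine ⟨star hP2.eigenvectorUnitary, Finset.univ.filter (fun i => hP2.eigenvalues i ≠ 0), ?_, ?_⟩
  · rw [hP2.rank_eq_card_non_zero_eigs, Fintype.card_subtype]
  intro v
  have h01 : ∀ i, hP2.eigenvalues i ^ 2 = hP2.eigenvalues i := by
    have h := hP2.conjStarAlgAut_star_eigenvectorUnitary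
    have h2 := congrArg (Unitary.conjStarAlgAut ℂ _ (star hP2.eigenvectorUnitary)) hP1
    rw [map_mul, h, Matrix.diagonal_mul_diagonal] at h2
    intro i
    have h3 := congrFun (Matrix.diagonal_injective h2) i
    simp only [Function.comp_apply] at h3
    rw [sq]
    exact_mod_cast h3
  have hs := hP2.spectral_theorem
  rw [Unitary.conjStarAlgAut_apply] at hs
  have hs' := congrArg (fun M => nsq (Matrix.mulVec M v)) hs
  refine hs'.trans ?_
  beta_reduce
  rw [mul_assoc, ← Matrix.mulVec_mulVec, aux_nsq_unitary, ← Matrix.mulVec_mulVec, nsq,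
    Finset.sum_filter]
  refine Finset.sum_congr rfl fun i _ => ?_
  rw [Matrix.mulVec_diagonal, norm_mul, mul_pow]
  have := h01 i
  simp only [Function.comp_apply, RCLike.norm_ofReal, sq_abs, this]
  split_ifs with h
  · have : hP2.eigenvalues i = 1 := by
      apply mul_left_cancel₀ h; linarith
    rw [this, one_mul]; rfl
  · push Not at h
    rw [h]; simp

theorem stmt6 (D d : ℕ) (hd : 1 ≤ d) (hdD : d ≤ D)
    (P : Matrix (Fin D) (Fin D) ℂ) (hP1 : P * P = P) (hP2 : P.IsHermitian) (hPr : P.rank = d)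
    (w : Measure (Fin D → ℂ)) [IsProbabilityMeasure w]
    (hsupp : w {v : Fin D → ℂ | nsq v = 1}ᶜ = 0)
    (hinv : ∀ U : UG D,
      Measure.map (fun v => (U : Matrix (Fin D) (Fin D) ℂ).mulVec v) w = w) :
    ∫ v, (nsq (P.mulVec v) - d / D) ^ 2 ∂w =
      (d : ℝ) * ((D : ℝ) - d) / ((D : ℝ) ^ 2 * ((D : ℝ) + 1)) := by
  have hD : 1 ≤ D := hd.trans hdD
  have hD' : (0 : ℝ) < D := by exact_mod_cast hD
  obtain ⟨U, s, hs, hU⟩ := aux_diag P hP1 hP2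
  rw [hPr] at hs
  have hI : ∀ f : (Fin D → ℂ) → ℝ, Continuous f → Integrable f w := aux_integrable w hsupp
  have hM := aux_moments hD w hsupp hinv
  simp_rw [hU]
  rw [aux_int_inv w hinv U (fun v => (∑ i ∈ s, ‖v i‖ ^ 2 - (d : ℝ) / D) ^ 2) (by fun_prop)]
  have hae : ∀ᵐ v ∂w, nsq v = 1 := by rw [ae_iff]; exact hsupp
  have h1 : ∀ i, ∫ v, ‖v i‖ ^ 2 ∂w = 1 / D := by
    intro i
    have : ∫ v, ‖v i‖ ^ 2 ∂w = ∑ j, ∫ v, ‖v i‖ ^ 2 * ‖v j‖ ^ 2 ∂w := by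
      rw [← integral_finsetSum _ (fun l _ => hI _ (by fun_prop))]
      apply integral_congr_ae
      filter_upwards [hae] with v hv
      rw [← Finset.mul_sum]
      change _ = _ * nsq v
      rw [hv, mul_one]
    rw [this]
    simp_rw [hM]
    rw [← Finset.sum_div]
    have h2 : ∑ j : Fin D, (if i = j then (2 : ℝ) else 1) = D + 1 := by
      have : ∀ j : Fin D, (if i = j then (2 : ℝ) else 1) = 1 + if i = j then 1 else 0 := by
        intro j; split_ifs <;> norm_num
      simp_rw [this, Finset.sum_add_distrib]
      simp
    rw [h2]
    field_simp
  have h2 : ∫ v, (∑ i ∈ s, ‖v i‖ ^ 2) ∂w = d / D := by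
    rw [integral_finsetSum _ (fun l _ => hI _ (by fun_prop))]
    simp_rw [h1]
    simp [hs, div_eq_mul_inv]
  have h3 : ∫ v, (∑ i ∈ s, ‖v i‖ ^ 2) ^ 2 ∂w = d * (d + 1) / (D * (D + 1)) := by
    simp_rw [sq (∑ i ∈ s, _), Finset.sum_mul_sum]
    rw [integral_finsetSum _ (fun l _ => hI _ (by fun_prop))]
    have : ∀ k ∈ s, ∫ v, ∑ l ∈ s, ‖v k‖ ^ 2 * ‖v l‖ ^ 2 ∂w = (d + 1) / ((D : ℝ) * (D + 1)) := by
      intro k hk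
      rw [integral_finsetSum _ (fun l _ => hI _ (by fun_prop))]
      simp_rw [hM]
      rw [← Finset.sum_div]
      congr 1
      have : ∀ j : Fin D, (if k = j then (2 : ℝ) else 1) = 1 + if k = j then 1 else 0 := by
        intro j; split_ifs <;> norm_num
      simp_rw [this, Finset.sum_add_distrib]
      simp [hs, hk]
    rw [Finset.sum_congr rfl this]
    simp [hs]
    ring
  have h4 : ∀ v : Fin D → ℂ, (∑ i ∈ s, ‖v i‖ ^ 2 - (d : ℝ) / D) ^ 2 =
      (∑ i ∈ s, ‖v i‖ ^ 2) ^ 2 - (2 * ((d : ℝ) / D)) * (∑ i ∈ s, ‖v i‖ ^ 2) + ((d : ℝ) / D) ^ 2 := by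
    intro v; ring
  simp_rw [h4]
  rw [integral_add (hI _ (by fun_prop)) (hI _ (by fun_prop)),
    integral_sub (hI _ (by fun_prop)) (hI _ (by fun_prop)), integral_const_mul, h2, h3]
  simp
  field_simp
  ring
end
end
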